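/- arXiv:1607.03286 — 3 statements merged into one kernel-verified Lean document; each statement's English description precedes it below -/
import Mathlib

section
/- Let D be a dcpo and let ℬ be a Scott-closed subset of the order sobrification D̂. Then ℬ ⊆ {A ∈ D̂ : A ⊆ ⋃ℬ}; and if moreover ℬ is strongly closed in D̂ (i.e., ℬ contains the supremum in D̂ of each of its irreducible subsets), then ℬ = {A ∈ D̂ : A ⊆ ⋃ℬ}. -/
namespace HoZhao

variable {α : Type*}

/-- A set is Scott-closed if it is a lower set and contains the supremum of each of its
nonempty directed subsets. -/
def ScottClosed [Preorder α] (S : Set α) : Prop :=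
  IsLowerSet S ∧ ∀ d : Set α, d ⊆ S → d.Nonempty → DirectedOn (· ≤ ·) d →
    ∀ a : α, IsLUB d a → a ∈ S

/-- A nonempty set is irreducible if whenever it is covered by two Scott-closed sets it is
contained in one of them. -/
def ScottIrred [Preorder α] (A : Set α) : Prop :=
  A.Nonempty ∧ ∀ B C : Set α, ScottClosed B → ScottClosed C → A ⊆ B ∪ C → A ⊆ B ∨ A ⊆ C

/-- A dcpo: every nonempty directed subset has a supremum. -/
def IsDcpo (α : Type*) [Preorder α] : Prop :=
  ∀ d : Set α, d.Nonempty → DirectedOn (· ≤ ·) d → ∃ a : α, IsLUB d a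

/-- The order sobrification: the poset of Scott-closed irreducible subsets, ordered by
inclusion. -/
abbrev OrderSob (α : Type*) [Preorder α] :=
  {A : Set α // ScottClosed A ∧ ScottIrred A}

/-!
Every closed irreducible set is the supremum, in the order sobrification, of the principal ideals
of its points. These ideals form an irreducible family, because `x ↦ ↓x` is Scott-continuous and
Scott-continuous maps preserve irreducibility. If `A ⊆ ⋃ ℬ`, each of them lies below a member of
`ℬ`, hence in `ℬ`, and strong closure puts their supremum `A` in `ℬ` as well.
-/

section ScottContinuous

variable {β : Type*} [Preorder α] [Preorder β] {f : α → β}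

theorem ScottClosed.preimage {C : Set β} (hC : ScottClosed C) (hf : ScottContinuous f) :
    ScottClosed (f ⁻¹' C) := by
  refine ⟨hC.1.preimage hf.monotone, fun d hdC hne hdir a ha => ?_⟩
  exact hC.2 (f '' d) (Set.image_subset_iff.2 hdC) (hne.image f)
    (hdir.mono_comp hf.monotone) (f a) (hf hne hdir ha)

theorem ScottIrred.image {A : Set α} (hA : ScottIrred A) (hf : ScottContinuous f) :
    ScottIrred (f '' A) := by
  refine ⟨hA.1.image f, fun B C hB hC hABC => ?_⟩
  simp only [Set.image_subset_iff] at hABC ⊢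
  exact hA.2 _ _ (hB.preimage hf) (hC.preimage hf) hABC

end ScottContinuous

section Preorder

variable [Preorder α]

theorem scottClosed_Iic (a : α) : ScottClosed (Set.Iic a) :=
  ⟨isLowerSet_Iic a, fun _ hd _ _ _ hb => hb.2 hd⟩

theorem scottIrred_of_isGreatest {A : Set α} {a : α} (ha : IsGreatest A a) : ScottIrred A :=
  ⟨ha.nonempty, fun _ _ hB hC hABC => (hABC ha.1).imp
    (fun haB _ hx => hB.1 (ha.2 hx) haB) (fun haC _ hx => hC.1 (ha.2 hx) haC)⟩

/-- A strongly closed set: one that contains the supremum of each of its irreducible subsets.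
Suprema are those that happen to exist, so the ambient order need not be an scpo. -/
def StronglyClosed (S : Set α) : Prop :=
  ∀ A : Set α, A ⊆ S → ScottIrred A → ∀ a : α, IsLUB A a → a ∈ S

namespace OrderSob

/-- The principal ideal `↓a` as a point of the order sobrification; `a ↦ ↓a` is the canonical
embedding of a partial order into its order sobrification. -/
def principal (a : α) : OrderSob α :=
  ⟨Set.Iic a, scottClosed_Iic a, scottIrred_of_isGreatest isGreatest_Iic⟩

theorem principal_le_iff {a : α} {T : OrderSob α} : principal a ≤ T ↔ a ∈ (T : Set α) :=
  ⟨fun h => h Set.self_mem_Iic, fun ha _ hx => T.2.1.1 hx ha⟩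

theorem mem_upperBounds_image_principal {d : Set α} {T : OrderSob α} :
    T ∈ upperBounds (principal '' d) ↔ d ⊆ T := by
  simp only [mem_upperBounds, Set.forall_mem_image, principal_le_iff, Set.subset_def]

theorem scottContinuous_principal : ScottContinuous (principal : α → OrderSob α) :=
  fun d hne hdir a ha =>
    ⟨mem_upperBounds_image_principal.2 ha.1, fun T hT =>
      principal_le_iff.2 (T.2.1.2 d (mem_upperBounds_image_principal.1 hT) hne hdir a ha)⟩

theorem isLUB_image_principal (A : OrderSob α) : IsLUB (principal '' (A : Set α)) A :=
  ⟨mem_upperBounds_image_principal.2 subset_rfl, fun _ => mem_upperBounds_image_principal.1⟩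

theorem principal_mem_iff_mem_biUnion {ℬ : Set (OrderSob α)} (hℬ : IsLowerSet ℬ) {a : α} :
    principal a ∈ ℬ ↔ a ∈ ⋃ B ∈ ℬ, (B : Set α) := by
  simp only [Set.mem_iUnion₂, exists_prop, ← principal_le_iff]
  exact ⟨fun ha => ⟨principal a, ha, le_rfl⟩, fun ⟨_, hB, haB⟩ => hℬ haB hB⟩

end OrderSob

open OrderSob

theorem closed_family_vs_counit_general {ℬ : Set (OrderSob α)} (hℬ : IsLowerSet ℬ) :
    ℬ ⊆ {A : OrderSob α | (A : Set α) ⊆ ⋃ B ∈ ℬ, (B : Set α)} ∧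
    (StronglyClosed ℬ → ℬ = {A : OrderSob α | (A : Set α) ⊆ ⋃ B ∈ ℬ, (B : Set α)}) := by
  have subset_counit : ℬ ⊆ {A : OrderSob α | (A : Set α) ⊆ ⋃ B ∈ ℬ, (B : Set α)} :=
    fun _ hA => Set.subset_biUnion_of_mem (u := fun B : OrderSob α => (B : Set α)) hA
  refine ⟨subset_counit, fun hstrong => subset_counit.antisymm fun A hA => ?_⟩
  have principal_mem : principal '' (A : Set α) ⊆ ℬ :=
    Set.image_subset_iff.2 fun _ hx => (principal_mem_iff_mem_biUnion hℬ).2 (hA hx)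
  have irred : ScottIrred (principal '' (A : Set α)) := A.2.2.image scottContinuous_principal
  exact hstrong _ principal_mem irred A (isLUB_image_principal A)

end Preorder

/-- For ℬ Scott-closed in D̂ one has ℬ ⊆ {A ∈ D̂ : A ⊆ ⋃ℬ}, with equality
when ℬ is strongly closed (contains the supremum of each of its irreducible subsets). -/
theorem closed_family_vs_counit [PartialOrder α] (hD : IsDcpo α)
    (ℬ : Set (OrderSob α)) (hℬ : ScottClosed ℬ) :
    ℬ ⊆ {A : OrderSob α | (A : Set α) ⊆ ⋃ B ∈ ℬ, (B : Set α)} ∧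
    ((∀ 𝒜 : Set (OrderSob α), 𝒜 ⊆ ℬ → ScottIrred 𝒜 →
        ∀ S : OrderSob α, IsLUB 𝒜 S → S ∈ ℬ) →
      ℬ = {A : OrderSob α | (A : Set α) ⊆ ⋃ B ∈ ℬ, (B : Set α)}) :=
  closed_family_vs_counit_general hℬ.1

end HoZhao
end

section
/- For arbitrary dcpos D and E, the order sobrifications D̂ and Ê are order-isomorphic if and only if the lattices Γ(D) and Γ(E) of Scott-closed subsets (ordered by inclusion) are order-isomorphic. -/
/-!
Scott-closed sets are the closed sets of the Scott topology, so `D̂` is the set of irreducible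
closed subsets of `D`. The lattice of closed sets determines `D̂` because the irreducible closed
sets are its sup-prime elements.

Conversely, `D̂` carries the sobrification topology, with closed sets `{A | A ⊆ C}` for `C` closed
in `D`, so its lattice of closed sets is `Γ(D)`. This topology is determined by the order of `D̂`:
it is the finest among the sober topologies whose specialization order is inclusion. Indeed, let
`σ` be such a topology and `𝓒` a `σ`-closed set. A sober topology is coarser than the Scott
topology of its specialization order, so the Scott-continuous map `x ↦ ↓x` is continuous from `D`
to `σ`, and the preimage `C` of `𝓒` is Scott-closed. If `A ∈ D̂` is contained in `C`, then
`{↓x | x ∈ A}` is irreducible in `σ`, and the generic point of its `σ`-closure is an element of `𝓒`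
above `A`; hence `𝓒 = {A | A ⊆ C}`. Any order isomorphism between `D̂` and `Ê` is therefore a
homeomorphism, and induces an isomorphism of the lattices of closed sets.
-/

namespace HoZhao

variable {α : Type*}

open Set Topology TopologicalSpace

section SupPrime

variable {X : Type*} [TopologicalSpace X] {L M : Type*} [SemilatticeSup L] [SemilatticeSup M]

theorem supPrime_closeds_iff {C : Closeds X} : SupPrime C ↔ IsIrreducible (C : Set X) := by
  refine and_congr (by rw [isMin_iff_eq_bot, Closeds.coe_nonempty]) ?_
  rw [isPreirreducible_iff_isClosed_union_isClosed]
  exact ⟨fun h B D hB hD => @h ⟨B, hB⟩ ⟨D, hD⟩, fun h B D => h B D B.isClosed D.isClosed⟩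

/-- Irreducible closed sets as the sup-prime elements of the lattice of closed sets, a description
depending only on the order of that lattice. -/
def irreducibleClosedsOrderIsoSupPrime : IrreducibleCloseds X ≃o {C : Closeds X // SupPrime C} where
  toFun A := ⟨⟨A, A.isClosed⟩, supPrime_closeds_iff.2 A.isIrreducible⟩
  invFun C := ⟨C.1, supPrime_closeds_iff.1 C.2, C.1.isClosed⟩
  map_rel_iff' := Iff.rfl

theorem supPrime_orderIso_apply (ψ : L ≃o M) {a : L} : SupPrime (ψ a) ↔ SupPrime a := by
  simp only [SupPrime, ψ.isMin_apply, ψ.surjective.forall, ← ψ.map_sup, ψ.le_iff_le]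

/-- The restriction of an isomorphism of semilattices to sup-prime elements. -/
def supPrimeCongr (ψ : L ≃o M) : {a : L // SupPrime a} ≃o {b : M // SupPrime b} where
  toEquiv := ψ.toEquiv.subtypeEquiv fun _ => (supPrime_orderIso_apply ψ).symm
  map_rel_iff' := ψ.le_iff_le

end SupPrime

section Sobrification

variable {X : Type*} [TopologicalSpace X] {B C : Set X}

/-- The irreducible closed sets contained in `C`. For closed `C` these are the closed sets of the
sobrification topology. -/
def irreduciblesIn (C : Set X) : Set (IrreducibleCloseds X) :=
  {A | (A : Set X) ⊆ C}

theorem irreduciblesIn_empty : irreduciblesIn (∅ : Set X) = ∅ :=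
  eq_empty_of_forall_notMem fun A hA => A.isIrreducible.nonempty.ne_empty (subset_empty_iff.1 hA)

theorem irreduciblesIn_sInter (𝓒 : Set (Set X)) :
    irreduciblesIn (⋂₀ 𝓒) = ⋂₀ (irreduciblesIn '' 𝓒) := by
  ext A
  simp only [irreduciblesIn, mem_ofPred_eq, subset_sInter_iff, sInter_image, mem_iInter]

theorem irreduciblesIn_union (hB : IsClosed B) (hC : IsClosed C) :
    irreduciblesIn (B ∪ C) = irreduciblesIn B ∪ irreduciblesIn C := by
  refine Subset.antisymm (fun A hA => ?_) (union_subset ?_ ?_)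
  · exact isPreirreducible_iff_isClosed_union_isClosed.1 A.isIrreducible.2 B C hB hC hA
  · exact fun A hA => hA.trans subset_union_left
  · exact fun A hA => hA.trans subset_union_right

/-- The sobrification topology: its closed sets are the sets `irreduciblesIn C` for `C` closed. -/
instance sobrificationTopology : TopologicalSpace (IrreducibleCloseds X) :=
  .ofClosed (irreduciblesIn '' {C | IsClosed C})
    ⟨∅, isClosed_empty, irreduciblesIn_empty⟩
    (fun _ h𝓕 => by
      obtain ⟨𝓒, h𝓒, rfl⟩ := subset_image_iff.1 h𝓕
      exact ⟨⋂₀ 𝓒, isClosed_sInter h𝓒, irreduciblesIn_sInter 𝓒⟩)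
    (by
      rintro _ ⟨B, hB, rfl⟩ _ ⟨C, hC, rfl⟩
      exact ⟨B ∪ C, hB.union hC, irreduciblesIn_union hB hC⟩)

theorem isClosed_irreducibleCloseds_iff {F : Set (IrreducibleCloseds X)} :
    IsClosed F ↔ ∃ C : Set X, IsClosed C ∧ irreduciblesIn C = F := by
  rw [← isOpen_compl_iff]
  change Fᶜᶜ ∈ irreduciblesIn '' {C | IsClosed C} ↔ _
  rw [compl_compl]
  rfl

theorem isClosed_irreduciblesIn (hC : IsClosed C) : IsClosed (irreduciblesIn C) :=
  isClosed_irreducibleCloseds_iff.2 ⟨C, hC, rfl⟩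

/-- The closure of a point, as a point of the sobrification. -/
def pointClosure (x : X) : IrreducibleCloseds X :=
  ⟨closure {x}, isIrreducible_singleton.closure, isClosed_closure⟩

theorem pointClosure_mem_irreduciblesIn_iff (hC : IsClosed C) {x : X} :
    pointClosure x ∈ irreduciblesIn C ↔ x ∈ C :=
  hC.closure_subset_iff.trans singleton_subset_iff

theorem pointClosure_le_iff {x : X} {A : IrreducibleCloseds X} : pointClosure x ≤ A ↔ x ∈ A :=
  pointClosure_mem_irreduciblesIn_iff A.isClosed

theorem irreduciblesIn_subset_iff (hB : IsClosed B) (hC : IsClosed C) :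
    irreduciblesIn B ⊆ irreduciblesIn C ↔ B ⊆ C := by
  refine ⟨fun h x hx => ?_, fun h A hA => hA.trans h⟩
  rw [← pointClosure_mem_irreduciblesIn_iff hC]
  exact h ((pointClosure_mem_irreduciblesIn_iff hB).2 hx)

/-- A space and its sobrification have the same lattice of closed sets. -/
noncomputable def closedsOrderIsoSobrification : Closeds X ≃o Closeds (IrreducibleCloseds X) :=
  RelIso.ofSurjective
    (OrderEmbedding.ofMapLEIff
      (fun C : Closeds X =>
        (⟨irreduciblesIn C, isClosed_irreduciblesIn C.isClosed⟩ : Closeds (IrreducibleCloseds X)))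
      fun B C => irreduciblesIn_subset_iff B.isClosed C.isClosed)
    fun F => by
      obtain ⟨C, hC, hCF⟩ := isClosed_irreducibleCloseds_iff.1 F.isClosed
      exact ⟨⟨C, hC⟩, Closeds.ext hCF⟩

theorem closure_singleton_irreducibleCloseds (A : IrreducibleCloseds X) : closure {A} = Iic A := by
  refine (isGenericPoint_iff_forall_closed (isClosed_irreduciblesIn A.isClosed) Subset.rfl).2 ?_
  intro F hF hAF
  obtain ⟨C, -, rfl⟩ := isClosed_irreducibleCloseds_iff.1 hF
  exact fun B hBA => Subset.trans hBA hAF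

theorem isIrreducible_of_irreduciblesIn (hC : IsClosed C)
    (h : IsIrreducible (irreduciblesIn C)) : IsIrreducible C := by
  refine ⟨?_, isPreirreducible_iff_isClosed_union_isClosed.2 fun B D hB hD hBD => ?_⟩
  · obtain ⟨A, hA⟩ := h.nonempty
    exact A.isIrreducible.nonempty.mono hA
  · rw [← irreduciblesIn_subset_iff hC (hB.union hD), irreduciblesIn_union hB hD] at hBD
    rw [← irreduciblesIn_subset_iff hC hB, ← irreduciblesIn_subset_iff hC hD]
    exact isPreirreducible_iff_isClosed_union_isClosed.1 h.2 _ _ (isClosed_irreduciblesIn hB)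
      (isClosed_irreduciblesIn hD) hBD

instance quasiSober_irreducibleCloseds : QuasiSober (IrreducibleCloseds X) where
  sober := by
    intro F hFirr hF
    obtain ⟨C, hC, rfl⟩ := isClosed_irreducibleCloseds_iff.1 hF
    let A : IrreducibleCloseds X := ⟨C, isIrreducible_of_irreduciblesIn hC hFirr, hC⟩
    exact ⟨A, closure_singleton_irreducibleCloseds A⟩

end Sobrification

section SpecializationOrder

variable {X Y : Type*} [TopologicalSpace Y] [Preorder Y]

theorem isLowerSet_of_isClosed (hY : ∀ y : Y, closure {y} = Iic y) {C : Set Y} (hC : IsClosed C) :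
    IsLowerSet C := by
  intro a b hba ha
  have hb : b ∈ closure {a} := (hY a).symm ▸ hba
  exact closure_minimal (singleton_subset_iff.2 ha) hC hb

theorem isIrreducible_of_directedOn (hY : ∀ y : Y, closure {y} = Iic y) {d : Set Y}
    (hne : d.Nonempty) (hdir : DirectedOn (· ≤ ·) d) : IsIrreducible d := by
  refine ⟨hne, fun U V hU hV ⟨a, had, haU⟩ ⟨b, hbd, hbV⟩ => ?_⟩
  have isUpperSet {W : Set Y} (hW : IsOpen W) : IsUpperSet W :=
    isLowerSet_compl.1 (isLowerSet_of_isClosed hY hW.isClosed_compl)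
  obtain ⟨c, hcd, hac, hbc⟩ := hdir a had b hbd
  exact ⟨c, hcd, isUpperSet hU hac haU, isUpperSet hV hbc hbV⟩

theorem exists_mem_upperBounds_of_isIrreducible [QuasiSober Y] (hY : ∀ y : Y, closure {y} = Iic y)
    {C S : Set Y} (hC : IsClosed C) (hS : IsIrreducible S) (hSC : S ⊆ C) :
    ∃ y ∈ C, y ∈ upperBounds S := by
  obtain ⟨y, hy⟩ := QuasiSober.sober hS.closure isClosed_closure
  refine ⟨y, closure_minimal hSC hC hy.mem, fun s hs => ?_⟩
  rw [← mem_Iic, ← hY, hy.def]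
  exact subset_closure hs

theorem dirSupClosed_of_isClosed [QuasiSober Y] (hY : ∀ y : Y, closure {y} = Iic y) {C : Set Y}
    (hC : IsClosed C) : DirSupClosed C := by
  intro d hdC hne hdir a ha
  obtain ⟨y, hyC, hy⟩ := exists_mem_upperBounds_of_isIrreducible hY hC
    (isIrreducible_of_directedOn hY hne hdir) hdC
  exact isLowerSet_of_isClosed hY hC (ha.2 hy) hyC

theorem continuous_of_scottContinuous [TopologicalSpace X] [Preorder X] [IsScott X univ]
    [QuasiSober Y] (hY : ∀ y : Y, closure {y} = Iic y) {f : X → Y} (hf : ScottContinuous f) :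
    Continuous f := by
  refine continuous_iff_isClosed.2 fun C hC => IsScott.isClosed_iff_isLowerSet_and_dirSupClosed.2
    ⟨(isLowerSet_of_isClosed hY hC).preimage hf.monotone, fun d hd hne hdir a ha => ?_⟩
  exact dirSupClosed_of_isClosed hY hC (image_subset_iff.2 hd) (hne.image f)
    (hdir.mono_comp fun _ _ hab => hf.monotone hab) (hf hne hdir ha)

end SpecializationOrder

section Scott

variable {X Y : Type*} [TopologicalSpace X] [Preorder X] [IsScott X univ] [TopologicalSpace Y]
  [Preorder Y]

theorem scottContinuous_pointClosure :
    ScottContinuous (pointClosure : X → IrreducibleCloseds X) := by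
  intro d hne hdir a ha
  refine ⟨forall_mem_image.2 fun x hx => pointClosure_le_iff.2 ?_,
    fun A hA => pointClosure_le_iff.2 ?_⟩
  · exact IsScott.isLowerSet_of_isClosed (pointClosure a).isClosed (ha.1 hx)
      (pointClosure_le_iff.1 le_rfl)
  · have hdA : d ⊆ A := fun x hx => pointClosure_le_iff.1 (hA (mem_image_of_mem _ hx))
    exact IsScott.dirSupClosed_of_isClosed A.isClosed hdA hne hdir ha

theorem continuous_orderIso_of_quasiSober [QuasiSober Y] (hY : ∀ y : Y, closure {y} = Iic y)
    (φ : IrreducibleCloseds X ≃o Y) : Continuous φ := by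
  have hφ : ScottContinuous φ := fun _ _ _ _ ha => φ.isLUB_image'.2 ha
  have hg : Continuous (φ ∘ pointClosure) :=
    continuous_of_scottContinuous hY (scottContinuous_pointClosure.comp hφ)
  refine continuous_iff_isClosed.2 fun C hC => isClosed_irreducibleCloseds_iff.2
    ⟨φ ∘ pointClosure ⁻¹' C, hC.preimage hg, Subset.antisymm (fun A hA => ?_) fun A hA x hx => ?_⟩
  · obtain ⟨y, hyC, hy⟩ := exists_mem_upperBounds_of_isIrreducible hY hC
      (A.isIrreducible.image _ hg.continuousOn) (image_subset_iff.2 hA)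
    have hAy : A ≤ φ.symm y := fun x hx =>
      pointClosure_le_iff.1 (φ.le_symm_apply.2 (hy (mem_image_of_mem _ hx)))
    exact isLowerSet_of_isClosed hY hC (φ.le_symm_apply.1 hAy) hyC
  · exact isLowerSet_of_isClosed hY hC (φ.monotone (pointClosure_le_iff.2 hx)) hA

/-- An order isomorphism between the sobrifications of Scott spaces, as a homeomorphism. -/
def homeomorphOfOrderIso [IsScott Y univ] (φ : IrreducibleCloseds X ≃o IrreducibleCloseds Y) :
    IrreducibleCloseds X ≃ₜ IrreducibleCloseds Y where
  toEquiv := φ.toEquiv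
  continuous_toFun := continuous_orderIso_of_quasiSober closure_singleton_irreducibleCloseds φ
  continuous_invFun := continuous_orderIso_of_quasiSober closure_singleton_irreducibleCloseds φ.symm

end Scott

section ClosedSetLattices

variable {X Y : Type*} [TopologicalSpace X] [TopologicalSpace Y]

/-- The isomorphism of lattices of closed sets induced by a homeomorphism. -/
def closedsCongr (h : X ≃ₜ Y) : Closeds X ≃o Closeds Y :=
  (Closeds.complOrderIso X).trans (h.opensCongr.dual.trans (Closeds.complOrderIso Y).symm)

/-- The isomorphism of posets of irreducible closed sets induced by an isomorphism of lattices of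
closed sets. -/
def irreducibleClosedsCongr (ψ : Closeds X ≃o Closeds Y) :
    IrreducibleCloseds X ≃o IrreducibleCloseds Y :=
  irreducibleClosedsOrderIsoSupPrime.trans
    ((supPrimeCongr ψ).trans irreducibleClosedsOrderIsoSupPrime.symm)

theorem nonempty_irreducibleCloseds_orderIso_iff [Preorder X] [Preorder Y] [IsScott X univ]
    [IsScott Y univ] :
    Nonempty (IrreducibleCloseds X ≃o IrreducibleCloseds Y) ↔
      Nonempty (Closeds X ≃o Closeds Y) := by
  refine ⟨fun ⟨φ⟩ => ⟨?_⟩, fun ⟨ψ⟩ => ⟨irreducibleClosedsCongr ψ⟩⟩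
  exact closedsOrderIsoSobrification.trans
    ((closedsCongr (homeomorphOfOrderIso φ)).trans closedsOrderIsoSobrification.symm)

end ClosedSetLattices

section ScottClosed

variable {X : Type*} [TopologicalSpace X] [Preorder X] [IsScott X univ]

theorem scottClosed_iff_isClosed {S : Set X} : ScottClosed S ↔ IsClosed S :=
  IsScott.isClosed_iff_isLowerSet_and_dirSupClosed.symm

theorem scottIrred_iff_isIrreducible {A : Set X} : ScottIrred A ↔ IsIrreducible A := by
  simp only [ScottIrred, IsIrreducible, isPreirreducible_iff_isClosed_union_isClosed,
    scottClosed_iff_isClosed]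

/-- Scott-closed sets as the closed sets of the Scott topology. -/
def gammaOrderIsoCloseds : {S : Set X // ScottClosed S} ≃o Closeds X where
  toFun S := ⟨S, scottClosed_iff_isClosed.1 S.2⟩
  invFun C := ⟨C, scottClosed_iff_isClosed.2 C.isClosed⟩
  map_rel_iff' := Iff.rfl

/-- The order sobrification as the irreducible closed sets of the Scott topology. -/
def orderSobOrderIsoIrreducibleCloseds : OrderSob X ≃o IrreducibleCloseds X where
  toFun A := ⟨A, scottIrred_iff_isIrreducible.1 A.2.2, scottClosed_iff_isClosed.1 A.2.1⟩
  invFun A := ⟨A, scottClosed_iff_isClosed.2 A.isClosed,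
    scottIrred_iff_isIrreducible.2 A.isIrreducible⟩
  map_rel_iff' := Iff.rfl

end ScottClosed

theorem orderSob_iso_iff_gamma_iso_general {β : Type*} [Preorder α] [Preorder β] :
    Nonempty (OrderSob α ≃o OrderSob β) ↔
      Nonempty ({S : Set α // ScottClosed S} ≃o {S : Set β // ScottClosed S}) := by
  let _ : TopologicalSpace α := scott α univ
  let _ : TopologicalSpace β := scott β univ
  have : IsScott α univ := ⟨rfl⟩
  have : IsScott β univ := ⟨rfl⟩
  calc Nonempty (OrderSob α ≃o OrderSob β)
    _ ↔ Nonempty (IrreducibleCloseds α ≃o IrreducibleCloseds β) :=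
      (orderSobOrderIsoIrreducibleCloseds.orderIsoCongr
        orderSobOrderIsoIrreducibleCloseds).nonempty_congr
    _ ↔ Nonempty (Closeds α ≃o Closeds β) := nonempty_irreducibleCloseds_orderIso_iff
    _ ↔ Nonempty ({S : Set α // ScottClosed S} ≃o {S : Set β // ScottClosed S}) :=
      (gammaOrderIsoCloseds.orderIsoCongr gammaOrderIsoCloseds).nonempty_congr.symm

/-- For arbitrary dcpos D and E, D̂ ≅ Ê iff Γ(D) ≅ Γ(E). -/
theorem orderSob_iso_iff_gamma_iso {β : Type*} [PartialOrder α] [PartialOrder β]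
    (hα : IsDcpo α) (hβ : IsDcpo β) :
    Nonempty (OrderSob α ≃o OrderSob β) ↔
      Nonempty ({S : Set α // ScottClosed S} ≃o {S : Set β // ScottClosed S}) :=
  orderSob_iso_iff_gamma_iso_general

end HoZhao
end

section
/- The poset 𝒯 (defined below on ℕ*) is a dcpo in which the up-set ↑s of every element s is linearly ordered (𝒯 is a tree with root ε); the map l : ℍ → 𝒯 sending (m,s) to s is Scott-continuous; and 𝒯 is sober in its Scott topology: every closed irreducible subset of 𝒯 equals ↓s for some s ∈ 𝒯. -/
namespace HoZhao

variable {α : Type*}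

/-- The underlying set of the dcpo ℍ: pairs (m, s) with m ∈ ℕ and s ∈ ℕ*. -/
abbrev HPt := ℕ × List ℕ

/-- (m, n::s) <₁ (m, n'::s) iff n < n'. -/
def hlt1 (p q : HPt) : Prop :=
  ∃ (m n n' : ℕ) (s : List ℕ), n < n' ∧ p = (m, n :: s) ∧ q = (m, n' :: s)

/-- (m, t++s) <₂ (m, s) iff t ≠ ε. -/
def hlt2 (p q : HPt) : Prop :=
  ∃ (m : ℕ) (t s : List ℕ), t ≠ [] ∧ p = (m, t ++ s) ∧ q = (m, s)

/-- (m, t++s) <₃ (m', s) iff t ≠ ε and min(t) ≤ m'. -/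
def hlt3 (p q : HPt) : Prop :=
  ∃ (m m' : ℕ) (t s : List ℕ), t ≠ [] ∧ t.minimum ≤ (m' : ℕ) ∧
    p = (m, t ++ s) ∧ q = (m', s)

/-- The strict order < on ℍ: <₁ ∪ <₂ ∪ <₃ ∪ (<₂;<₁) ∪ (<₃;<₁). -/
def hlt (p q : HPt) : Prop :=
  hlt1 p q ∨ hlt2 p q ∨ hlt3 p q ∨ (∃ r, hlt2 p r ∧ hlt1 r q) ∨ (∃ r, hlt3 p r ∧ hlt1 r q)

/-- The order ≤ on ℍ: < together with equality. -/
def hle (p q : HPt) : Prop := hlt p q ∨ p = q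

/-- Least upper bound with respect to a relation r. -/
def IsLubRel {γ : Type*} (r : γ → γ → Prop) (s : Set γ) (a : γ) : Prop :=
  (∀ x ∈ s, r x a) ∧ ∀ b, (∀ x ∈ s, r x b) → r a b

/-- Scott-closedness with respect to a relation r: a lower set containing the r-suprema of
its nonempty r-directed subsets. -/
def ScottClosedRel {γ : Type*} (r : γ → γ → Prop) (S : Set γ) : Prop :=
  (∀ x y, r x y → y ∈ S → x ∈ S) ∧
  ∀ d : Set γ, d ⊆ S → d.Nonempty → DirectedOn r d → ∀ a, IsLubRel r d a → a ∈ S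

/-- Irreducibility with respect to a relation r. -/
def ScottIrredRel {γ : Type*} (r : γ → γ → Prop) (A : Set γ) : Prop :=
  A.Nonempty ∧ ∀ B C : Set γ, ScottClosedRel r B → ScottClosedRel r C → A ⊆ B ∪ C →
    A ⊆ B ∨ A ⊆ C

/-- n::u ⊏₁ n'::u iff n < n'. -/
def tlt1 (s t : List ℕ) : Prop := ∃ (n n' : ℕ) (u : List ℕ), n < n' ∧ s = n :: u ∧ t = n' :: u

/-- u++t ⊏₂ t iff u ≠ ε. -/
def tlt2 (s t : List ℕ) : Prop := ∃ u : List ℕ, u ≠ [] ∧ s = u ++ t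

/-- The strict order ⊏ on the tree 𝒯: ⊏₁ ∪ ⊏₂ ∪ (⊏₂;⊏₁). -/
def tlt (s t : List ℕ) : Prop := tlt1 s t ∨ tlt2 s t ∨ ∃ r, tlt2 s r ∧ tlt1 r t

/-- The order ⊑ on 𝒯: ⊏ together with equality. -/
def tle (s t : List ℕ) : Prop := tlt s t ∨ s = t

/-!
Comparing `s` with `t` in 𝒯 means dropping an initial segment of `s` and then raising the head of
what remains. Hence the up-set of `a :: s` consists of the lists `n :: s` with `a ≤ n`, all below
the up-set of `s`, and induction shows that every up-set is well-ordered. So up-sets are linear,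
and a least upper bound is just a least element of the set of upper bounds.

For the level map, look at a shortest list occurring in a directed subset of ℍ. Beyond it only the
head can still grow, so either the set has a greatest element, or it contains `(m, k :: u)` for
arbitrarily large `k` and is bounded by `(m, u)`. In the second case the lists `k :: u` already
have supremum `u` in 𝒯.

For sobriety, let `A` be closed and `x ∈ A`. The part of `A` above `x` is a chain, and its supremum
`s` is a maximal element of `A`. Since up-sets are linear, the elements of `A` that are not below
`s` again form a closed set, so if `A` is irreducible then nothing but `↓s` remains.
-/

section TreeDcpo

variable {γ : Type*} {r : γ → γ → Prop}

theorem scottClosedRel_setOf_rel [IsTrans γ r] (s : γ) : ScottClosedRel r {t | r t s} :=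
  ⟨fun _ _ hxy hys => _root_.trans hxy hys, fun _ hd _ _ _ ha => ha.2 s fun _ hy => hd hy⟩

theorem ScottClosedRel.setOf_mem_and_not_rel [IsTrans γ r]
    (hlin : ∀ x y z, r x y → r x z → r y z ∨ r z y) {A : Set γ} (hA : ScottClosedRel r A) {s : γ}
    (hmax : ∀ y ∈ A, r s y → r y s) : ScottClosedRel r {t | t ∈ A ∧ ¬ r t s} := by
  refine ⟨fun x y hxy ⟨hyA, hys⟩ => ⟨hA.1 x y hxy hyA, fun hxs => ?_⟩, fun d hd hne hdir a ha => ?_⟩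
  · exact (hlin x y s hxy hxs).elim hys fun hsy => hys (hmax y hyA hsy)
  · obtain ⟨y, hy⟩ := hne
    exact ⟨hA.2 d (fun x hx => (hd hx).1) ⟨y, hy⟩ hdir a ha,
      fun has => (hd hy).2 (_root_.trans (ha.1 y hy) has)⟩

theorem ScottClosedRel.exists_maximal [IsPreorder γ r]
    (hdcpo : ∀ d : Set γ, d.Nonempty → DirectedOn r d → ∃ a, IsLubRel r d a)
    (hlin : ∀ x y z, r x y → r x z → r y z ∨ r z y) {A : Set γ} (hA : ScottClosedRel r A)
    (hne : A.Nonempty) : ∃ s ∈ A, ∀ y ∈ A, r s y → r y s := by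
  obtain ⟨x, hx⟩ := hne
  have hxmem : x ∈ {y ∈ A | r x y} := ⟨hx, refl x⟩
  have hdir : DirectedOn r {y ∈ A | r x y} :=
    IsChain.directedOn fun y hy z hz _ => hlin x y z hy.2 hz.2
  obtain ⟨s, hs⟩ := hdcpo _ ⟨x, hxmem⟩ hdir
  exact ⟨s, hA.2 _ (Set.sep_subset _ _) ⟨x, hxmem⟩ hdir s hs,
    fun y hy hsy => hs.1 y ⟨hy, _root_.trans (hs.1 x hxmem) hsy⟩⟩

theorem ScottIrredRel.exists_eq_setOf_rel [IsPreorder γ r]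
    (hdcpo : ∀ d : Set γ, d.Nonempty → DirectedOn r d → ∃ a, IsLubRel r d a)
    (hlin : ∀ x y z, r x y → r x z → r y z ∨ r z y) {A : Set γ} (hirr : ScottIrredRel r A)
    (hA : ScottClosedRel r A) : ∃ s, A = {t | r t s} := by
  obtain ⟨s, hsA, hmax⟩ := hA.exists_maximal hdcpo hlin hirr.1
  have hcover : A ⊆ {t | r t s} ∪ {t | t ∈ A ∧ ¬ r t s} := fun t ht =>
    (em (r t s)).imp_right fun hts => ⟨ht, hts⟩
  refine ⟨s, Set.Subset.antisymm ?_ fun t hts => hA.1 t s hts hsA⟩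
  exact (hirr.2 _ _ (scottClosedRel_setOf_rel s) (hA.setOf_mem_and_not_rel hlin hmax)
    hcover).resolve_right fun h => (h hsA).2 (refl s)

end TreeDcpo

/-- The reflexive closure ⊑₁ of ⊏₁: two lists that are equal except that the head may increase.
Given by its two cases rather than as `s = t ∨ tlt1 s t`, so that it can be inverted when either
list is known; `headLE_iff` relates the two forms. -/
inductive HeadLE : List ℕ → List ℕ → Prop
  | nil : HeadLE [] []
  | cons {m n : ℕ} (h : m ≤ n) (u : List ℕ) : HeadLE (m :: u) (n :: u)

namespace HeadLE

variable {s t u : List ℕ}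

protected theorem refl : ∀ s, HeadLE s s
  | [] => nil
  | _ :: s => cons le_rfl s

protected theorem trans (hst : HeadLE s t) (htu : HeadLE t u) : HeadLE s u := by
  cases hst with
  | nil => exact htu
  | cons h v => cases htu with | cons h' => exact cons (h.trans h') v

theorem length_eq (h : HeadLE s t) : s.length = t.length := by
  cases h <;> rfl

end HeadLE

theorem headLE_iff {s t : List ℕ} : HeadLE s t ↔ s = t ∨ tlt1 s t := by
  constructor
  · rintro (_ | ⟨h, u⟩)
    · exact Or.inl rfl
    · exact h.eq_or_lt.imp (fun h => by rw [h]) fun h => ⟨_, _, u, h, rfl, rfl⟩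
  · rintro (rfl | ⟨n, n', u, h, rfl, rfl⟩)
    · exact HeadLE.refl s
    · exact HeadLE.cons h.le u

section Tree

variable {s t u : List ℕ}

theorem tle_iff : tle s t ↔ ∃ r, r <:+ s ∧ HeadLE r t := by
  simp only [headLE_iff]
  constructor
  · rintro ((h | ⟨w, -, rfl⟩ | ⟨r, ⟨w, -, rfl⟩, h⟩) | rfl)
    · exact ⟨s, List.suffix_rfl, Or.inr h⟩
    · exact ⟨t, List.suffix_append w t, Or.inl rfl⟩
    · exact ⟨r, List.suffix_append w r, Or.inr h⟩
    · exact ⟨s, List.suffix_rfl, Or.inl rfl⟩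
  · rintro ⟨r, ⟨w, rfl⟩, h⟩
    rcases eq_or_ne w [] with rfl | hw
    · exact h.symm.imp Or.inl id
    · rcases h with rfl | h
      · exact Or.inl (Or.inr (Or.inl ⟨w, hw, rfl⟩))
      · exact Or.inl (Or.inr (Or.inr ⟨r, ⟨w, hw, rfl⟩, h⟩))

theorem nil_tle_iff : tle [] t ↔ t = [] := by
  simp only [tle_iff, List.suffix_nil, exists_eq_left]
  exact ⟨fun h => by cases h; rfl, fun h => h ▸ HeadLE.nil⟩

theorem cons_tle_iff {a : ℕ} : tle (a :: s) t ↔ HeadLE (a :: s) t ∨ tle s t := by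
  simp only [tle_iff, List.suffix_cons_iff, or_and_right, exists_or, exists_eq_left]

theorem tle_nil (s : List ℕ) : tle s [] :=
  tle_iff.2 ⟨[], List.nil_suffix, HeadLE.nil⟩

theorem tle_trans (hst : tle s t) (htu : tle t u) : tle s u := by
  induction s with
  | nil => rwa [nil_tle_iff.1 hst] at htu
  | cons a s ih =>
    rcases cons_tle_iff.1 hst with hhead | hst
    · cases hhead with
      | cons h =>
        exact cons_tle_iff.2 ((cons_tle_iff.1 htu).imp_left (HeadLE.cons h s).trans)
    · exact cons_tle_iff.2 (Or.inr (ih hst))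

instance : IsPreorder (List ℕ) tle where
  refl _ := Or.inr rfl
  trans _ _ _ := tle_trans

theorem exists_least_of_forall_tle {B : Set (List ℕ)} (hB : B.Nonempty) (hs : ∀ b ∈ B, tle s b) :
    ∃ a ∈ B, ∀ b ∈ B, tle a b := by
  induction s with
  | nil =>
    obtain ⟨b, hb⟩ := hB
    have eq_nil : ∀ c ∈ B, c = [] := fun c hc => nil_tle_iff.1 (hs c hc)
    exact ⟨b, hb, fun c hc => eq_nil c hc ▸ tle_nil b⟩
  | cons a s ih =>
    have hcons : ∀ b ∈ B, HeadLE (a :: s) b ∨ tle s b := fun b hb => cons_tle_iff.1 (hs b hb)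
    by_cases hhead : ∃ n, n :: s ∈ B
    · classical
      refine ⟨Nat.find hhead :: s, Nat.find_spec hhead, fun b hb => cons_tle_iff.2 ?_⟩
      refine (hcons b hb).imp_left fun h => ?_
      cases h with
      | cons => exact HeadLE.cons (Nat.find_min' hhead hb) s
    · refine ih fun b hb => (hcons b hb).resolve_left fun h => ?_
      cases h with
      | cons => exact hhead ⟨_, hb⟩

theorem tle_or_tle_of_tle (hst : tle s t) (hsu : tle s u) : tle t u ∨ tle u t := by
  have hs : ∀ b ∈ ({t, u} : Set (List ℕ)), tle s b := by
    rintro b (rfl | rfl)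
    exacts [hst, hsu]
  obtain ⟨a, ha, hleast⟩ := exists_least_of_forall_tle (Set.insert_nonempty t {u}) hs
  rcases ha with rfl | rfl
  · exact Or.inl (hleast u (Or.inr rfl))
  · exact Or.inr (hleast t (Or.inl rfl))

theorem exists_isLubRel_tle {d : Set (List ℕ)} (hd : d.Nonempty) : ∃ a, IsLubRel tle d a := by
  obtain ⟨x, hx⟩ := hd
  exact exists_least_of_forall_tle (B := {b | ∀ y ∈ d, tle y b}) ⟨[], fun y _ => tle_nil y⟩
    fun _ hb => hb x hx

theorem tle_of_forall_exists_cons_tle (h : ∀ n, ∃ k > n, tle (k :: u) t) : tle u t := by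
  obtain ⟨k, -, hk⟩ := h 0
  rcases cons_tle_iff.1 hk with hhead | hut
  · cases hhead with
    | @cons _ n =>
      obtain ⟨j, hnj, hj⟩ := h n
      refine (cons_tle_iff.1 hj).resolve_left fun hhead => ?_
      cases hhead with
      | cons hjn => exact hjn.not_gt hnj
  · exact hut

end Tree

section LevelMap

variable {p q : HPt}

theorem hlt1_iff : hlt1 p q ↔ p.1 = q.1 ∧ tlt1 p.2 q.2 := by
  constructor
  · rintro ⟨m, n, n', s, h, rfl, rfl⟩
    exact ⟨rfl, n, n', s, h, rfl, rfl⟩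
  · obtain ⟨m, _⟩ := p
    rintro ⟨rfl, n, n', s, h, rfl, hq⟩
    exact ⟨_, n, n', s, h, rfl, Prod.ext rfl hq⟩

-- As `[].minimum = ⊤`, the alternative `t.minimum ≤ q.1` includes the condition `t ≠ []` of `<₃`.
theorem hle_iff : hle p q ↔ ∃ t r, t ++ r = p.2 ∧ (p.1 = q.1 ∨ t.minimum ≤ (q.1 : ℕ)) ∧
    HeadLE r q.2 := by
  simp only [hle, hlt, hlt1_iff, headLE_iff]
  constructor
  · rintro ((⟨hm, h⟩ | ⟨m, t, s, -, rfl, rfl⟩ | ⟨m, m', t, s, -, ht, rfl, rfl⟩ |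
      ⟨_, ⟨m, t, s, -, rfl, rfl⟩, hm, h⟩ | ⟨_, ⟨m, m', t, s, -, ht, rfl, rfl⟩, hm, h⟩) | rfl)
    · exact ⟨[], p.2, rfl, Or.inl hm, Or.inr h⟩
    · exact ⟨t, s, rfl, Or.inl rfl, Or.inl rfl⟩
    · exact ⟨t, s, rfl, Or.inr ht, Or.inl rfl⟩
    · exact ⟨t, s, rfl, Or.inl hm, Or.inr h⟩
    · exact ⟨t, s, rfl, Or.inr (hm ▸ ht), Or.inr h⟩
    · exact ⟨[], p.2, rfl, Or.inl rfl, Or.inl rfl⟩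
  · obtain ⟨m, _⟩ := p
    obtain ⟨m', s⟩ := q
    rintro ⟨t, r, rfl, hm, h⟩
    rcases eq_or_ne t [] with rfl | ht
    · obtain rfl : m = m' := hm.resolve_right (by simp)
      exact h.symm.imp (fun h => Or.inl ⟨rfl, h⟩) (congrArg (Prod.mk m))
    · rcases hm with rfl | hm <;> rcases h with rfl | h
      · exact Or.inl (Or.inr (Or.inl ⟨m, t, r, ht, rfl, rfl⟩))
      · exact Or.inl (Or.inr (Or.inr (Or.inr (Or.inl
          ⟨(m, r), ⟨m, t, r, ht, rfl, rfl⟩, rfl, h⟩))))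
      · exact Or.inl (Or.inr (Or.inr (Or.inl ⟨m, m', t, r, ht, hm, rfl, rfl⟩)))
      · exact Or.inl (Or.inr (Or.inr (Or.inr (Or.inr
          ⟨(m', r), ⟨m, m', t, r, ht, hm, rfl, rfl⟩, rfl, h⟩))))

theorem tle_snd_of_hle (h : hle p q) : tle p.2 q.2 := by
  obtain ⟨t, r, hp, -, hr⟩ := hle_iff.1 h
  exact tle_iff.2 ⟨r, ⟨t, hp⟩, hr⟩

theorem hle_of_hle_cons {m n : ℕ} {u : List ℕ} (h : hle p (m, n :: u)) : hle p (m, u) := by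
  obtain ⟨t, r, hp, hm, hr⟩ := hle_iff.1 h
  cases hr with
  | @cons k =>
    refine hle_iff.2 ⟨t ++ [k], u, by simpa using hp, hm.imp_right fun ht => ?_, HeadLE.refl u⟩
    rw [List.minimum_concat]
    exact (min_le_left _ _).trans ht

theorem fst_eq_and_headLE_of_hle (h : hle p q) (hlen : p.2.length ≤ q.2.length) :
    p.1 = q.1 ∧ HeadLE p.2 q.2 := by
  obtain ⟨t, r, hp, hm, hr⟩ := hle_iff.1 h
  obtain rfl : t = [] := by
    rw [← hp, ← hr.length_eq, List.length_append] at hlen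
    exact List.eq_nil_of_length_eq_zero (by omega)
  refine ⟨hm.resolve_right (by simp), ?_⟩
  rwa [← hp, List.nil_append]

theorem exists_mem_headLE_hle {d : Set HPt} (hd : DirectedOn hle d) {m : ℕ} {s : List ℕ}
    (hs : (m, s) ∈ d) (hmin : ∀ q ∈ d, s.length ≤ q.2.length) {x : HPt} (hx : x ∈ d) :
    ∃ s', HeadLE s s' ∧ (m, s') ∈ d ∧ hle x (m, s') := by
  obtain ⟨⟨m', s'⟩, hz, hxz, hsz⟩ := hd x hx _ hs
  obtain ⟨rfl, hss'⟩ := fst_eq_and_headLE_of_hle hsz (hmin _ hz)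
  exact ⟨s', hss', hz, hxz⟩

theorem exists_greatest_or_unbounded_of_directedOn_hle {d : Set HPt} (hne : d.Nonempty)
    (hd : DirectedOn hle d) :
    (∃ q ∈ d, ∀ x ∈ d, hle x q) ∨
      ∃ m u, (∀ n, ∃ k > n, (m, k :: u) ∈ d) ∧ ∀ x ∈ d, hle x (m, u) := by
  obtain ⟨⟨m, s⟩, hs, hmin⟩ := WellFounded.has_min (measure fun q : HPt => q.2.length).wf d hne
  replace hmin : ∀ q ∈ d, s.length ≤ q.2.length := fun q hq => not_lt.1 (hmin q hq)
  cases s with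
  | nil =>
    refine Or.inl ⟨(m, []), hs, fun x hx => ?_⟩
    obtain ⟨_, ⟨⟩, -, hx⟩ := exists_mem_headLE_hle hd hs hmin hx
    exact hx
  | cons n₀ u =>
    have hcofinal : ∀ n, (m, n :: u) ∈ d → ∀ x ∈ d,
        ∃ k, n ≤ k ∧ (m, k :: u) ∈ d ∧ hle x (m, k :: u) := fun n hn x hx => by
      obtain ⟨_, ⟨⟩ | ⟨hnk⟩, hk, hxk⟩ := exists_mem_headLE_hle hd hn hmin hx
      exact ⟨_, hnk, hk, hxk⟩
    by_cases hbdd : BddAbove {k | (m, k :: u) ∈ d}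
    · obtain ⟨N, hN, hNmax⟩ := hbdd.exists_isGreatest_of_nonempty ⟨n₀, hs⟩
      refine Or.inl ⟨(m, N :: u), hN, fun x hx => ?_⟩
      obtain ⟨k, hNk, hk, hxk⟩ := hcofinal N hN x hx
      rwa [hNk.antisymm (hNmax hk)]
    · refine Or.inr ⟨m, u, fun n => ?_, fun x hx => ?_⟩
      · exact (not_bddAbove_iff.1 hbdd n).imp fun k hk => hk.symm
      · obtain ⟨k, -, -, hxk⟩ := hcofinal n₀ hs x hx
        exact hle_of_hle_cons hxk

theorem isLubRel_tle_image_snd {d : Set HPt} (hne : d.Nonempty) (hd : DirectedOn hle d) {a : HPt}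
    (ha : IsLubRel hle d a) : IsLubRel tle (Prod.snd '' d) a.2 := by
  refine ⟨Set.forall_mem_image.2 fun x hx => tle_snd_of_hle (ha.1 x hx), fun b hb => ?_⟩
  replace hb : ∀ x ∈ d, tle x.2 b := Set.forall_mem_image.1 hb
  rcases exists_greatest_or_unbounded_of_directedOn_hle hne hd with
    ⟨q, hq, hgreatest⟩ | ⟨m, u, hunb, hbound⟩
  · exact tle_trans (tle_snd_of_hle (ha.2 q hgreatest)) (hb q hq)
  · have hau : tle a.2 u := tle_snd_of_hle (ha.2 (m, u) hbound)
    refine tle_trans hau (tle_of_forall_exists_cons_tle fun n => ?_)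
    exact (hunb n).imp fun k hk => ⟨hk.1, hb _ hk.2⟩

end LevelMap

theorem tree_dcpo_level_map_sober_general :
    (∀ d : Set (List ℕ), d.Nonempty → ∃ a : List ℕ, IsLubRel tle d a) ∧
    (∀ s : List ℕ, tle s []) ∧
    (∀ s t u : List ℕ, tle s t → tle s u → tle t u ∨ tle u t) ∧
    (∀ p q : HPt, hle p q → tle p.2 q.2) ∧
    (∀ d : Set HPt, d.Nonempty → DirectedOn hle d → ∀ a : HPt, IsLubRel hle d a →
      IsLubRel tle (Prod.snd '' d) a.2) ∧
    (∀ A : Set (List ℕ), ScottClosedRel tle A → ScottIrredRel tle A →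
      ∃ s : List ℕ, A = {t : List ℕ | tle t s}) :=
  ⟨fun _ => exists_isLubRel_tle, tle_nil, fun _ _ _ => tle_or_tle_of_tle,
    fun _ _ => tle_snd_of_hle, fun _ hne hd _ => isLubRel_tle_image_snd hne hd,
    fun _ hA hirr => hirr.exists_eq_setOf_rel (fun _ hne _ => exists_isLubRel_tle hne)
      (fun _ _ _ => tle_or_tle_of_tle) hA⟩

/-- 𝒯 is a dcpo; it is a tree with root ε (every up-set is linearly
ordered); the level map l : ℍ → 𝒯, (m,s) ↦ s is Scott-continuous (monotone and preserving
suprema of nonempty directed sets); and 𝒯 is sober in its Scott topology: every closed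
irreducible subset of 𝒯 is a principal downset. -/
theorem tree_dcpo_level_map_sober :
    (∀ d : Set (List ℕ), d.Nonempty → DirectedOn tle d → ∃ a : List ℕ, IsLubRel tle d a) ∧
    (∀ s : List ℕ, tle s []) ∧
    (∀ s t u : List ℕ, tle s t → tle s u → tle t u ∨ tle u t) ∧
    (∀ p q : HPt, hle p q → tle p.2 q.2) ∧
    (∀ d : Set HPt, d.Nonempty → DirectedOn hle d → ∀ a : HPt, IsLubRel hle d a →
      IsLubRel tle (Prod.snd '' d) a.2) ∧
    (∀ A : Set (List ℕ), ScottClosedRel tle A → ScottIrredRel tle A →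
      ∃ s : List ℕ, A = {t : List ℕ | tle t s}) :=
  tree_dcpo_level_map_sober_general.imp_left fun hlub d hne _ => hlub d hne

end HoZhao
end
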